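/- arXiv:2209.12631 — 2 statements merged into one kernel-verified Lean document; each statement's English description precedes it below -/
import Mathlib

section
/- If G is a connected block graph, then mob(G) = ω(G), where ω(G) is the clique number of G. -/
/-- `S` is a general position set of `G`: no three distinct vertices of `S`
lie on a common shortest path. -/
def IsGPSet {V : Type*} (G : SimpleGraph V) (S : Finset V) : Prop :=
  ∀ x ∈ S, ∀ y ∈ S, ∀ z ∈ S, x ≠ y → y ≠ z → x ≠ z →
    G.dist x y + G.dist y z ≠ G.dist x z

/-- A legal move: one robot moves from an occupied vertex `u` to an adjacent
unoccupied vertex `v` so that the new set of occupied vertices is again in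
general position. -/
def LegalMove {V : Type*} [DecidableEq V] (G : SimpleGraph V) (S T : Finset V) : Prop :=
  ∃ u ∈ S, ∃ v, v ∉ S ∧ G.Adj u v ∧ T = insert v (S.erase u) ∧ IsGPSet G T

/-- `S` is a mobile general position set of `G`: `S` is in general position and
there is a finite sequence of legal moves starting from `S` after which every
vertex of `G` has been occupied at some stage. -/
def IsMobileGPSet {V : Type*} [DecidableEq V] (G : SimpleGraph V) (S : Finset V) : Prop :=
  IsGPSet G S ∧ ∃ (m : ℕ) (f : ℕ → Finset V), f 0 = S ∧
    (∀ i < m, LegalMove G (f i) (f (i + 1))) ∧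
    ∀ v : V, ∃ i ≤ m, v ∈ f i

/-- The mobile general position number of `G`. -/
noncomputable def mob {V : Type*} [DecidableEq V] (G : SimpleGraph V) : ℕ :=
  sSup {n | ∃ S : Finset V, IsMobileGPSet G S ∧ S.card = n}

/-- The general position number of `G`. -/
noncomputable def gpNum {V : Type*} (G : SimpleGraph V) : ℕ :=
  sSup {n | ∃ S : Finset V, IsGPSet G S ∧ S.card = n}

/-- A set `B` of vertices induces a connected subgraph without cut-vertices. -/
def IsBlockCandidate {V : Type*} (G : SimpleGraph V) (B : Set V) : Prop :=
  (SimpleGraph.induce B G).Connected ∧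
    ∀ x ∈ B, B \ {x} = ∅ ∨ (SimpleGraph.induce (B \ {x}) G).Connected

/-- A block of `G`: a maximal set of vertices inducing a connected subgraph
without cut-vertices. -/
def IsBlock {V : Type*} (G : SimpleGraph V) (B : Set V) : Prop :=
  IsBlockCandidate G B ∧ ∀ B' : Set V, IsBlockCandidate G B' → B ⊆ B' → B' = B

/-- A block graph: a connected graph in which every block is a clique. -/
def IsBlockGraph {V : Type*} (G : SimpleGraph V) : Prop :=
  G.Connected ∧ ∀ B : Set V, IsBlock G B → G.IsClique B

namespace MobBlock

open SimpleGraph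

variable {V : Type*}

/-- `G` with the vertex `v` isolated. -/
def Del (G : SimpleGraph V) (v : V) : SimpleGraph V where
  Adj a b := G.Adj a b ∧ a ≠ v ∧ b ≠ v
  symm := ⟨fun _ _ h => ⟨h.1.symm, h.2.2, h.2.1⟩⟩
  loopless := ⟨fun a h => G.loopless.irrefl a h.1⟩

/-- `a` and `b` are connected in `G - v` (or equal). -/
abbrev R (G : SimpleGraph V) (v a b : V) : Prop := (Del G v).Reachable a b

lemma R_of_adj {G : SimpleGraph V} {v a b : V} (h : G.Adj a b) (ha : a ≠ v) (hb : b ≠ v) :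
    R G v a b :=
  SimpleGraph.Adj.reachable (G := Del G v) ⟨h, ha, hb⟩

lemma R_self_eq {G : SimpleGraph V} {v a : V} (h : R G v v a) : a = v := by
  obtain ⟨p⟩ := h
  cases p with
  | nil => rfl
  | cons h p => exact absurd rfl h.2.1

lemma R_of_walk {G : SimpleGraph V} {v a b : V} (p : G.Walk a b) (h : v ∉ p.support) :
    R G v a b := by
  induction p with
  | nil => exact Reachable.refl _
  | cons hadj p ih =>
    rw [Walk.support_cons, List.mem_cons, not_or] at h
    refine (R_of_adj hadj (Ne.symm h.1) ?_).trans (ih h.2)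
    rintro rfl
    exact h.2 p.start_mem_support

lemma walk_of_R {G : SimpleGraph V} {v a b : V} (h : R G v a b) (ha : a ≠ v) :
    ∃ p : G.Walk a b, v ∉ p.support := by
  obtain ⟨p⟩ := h
  induction p with
  | nil => exact ⟨Walk.nil, by simpa using Ne.symm ha⟩
  | cons hadj p ih =>
    obtain ⟨q, hq⟩ := ih hadj.2.2
    exact ⟨Walk.cons hadj.1 q, by simpa [hq] using Ne.symm ha⟩

lemma exists_pred {G : SimpleGraph V} (hc : G.Connected) {x u : V} {k : ℕ}
    (h : G.dist x u = k + 1) : ∃ w, G.Adj w u ∧ G.dist x w = k := by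
  obtain ⟨p, hp⟩ := hc.exists_walk_length_eq_dist u x
  cases p with
  | nil => simp at h
  | cons hadj p =>
    rename_i w
    refine ⟨w, hadj.symm, ?_⟩
    have h1 := dist_le p
    have h2 : G.dist x u ≤ G.dist x w + G.dist w u := hc.dist_triangle
    have h3 : G.dist w u = 1 := dist_eq_one_iff_adj.2 hadj.symm
    rw [dist_comm] at h1
    rw [Walk.length_cons, dist_comm (u := u)] at hp
    omega

lemma R_of_dist {G : SimpleGraph V} (hc : G.Connected) {x v : V} (k : ℕ) :
    ∀ u, G.dist x u = k → u ≠ v → G.dist x u ≤ G.dist x v → R G v x u := by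
  induction k with
  | zero =>
    intro u h _ _
    rw [hc.dist_eq_zero_iff] at h
    subst h
    exact Reachable.refl _
  | succ k ih =>
    intro u h hne hle
    obtain ⟨w, hw, hd⟩ := exists_pred hc h
    have hwv : w ≠ v := by
      rintro rfl
      omega
    exact (ih w hd hwv (by omega)).trans (R_of_adj hw hwv hne)

lemma dist_of_not_R {G : SimpleGraph V} (hc : G.Connected) {v x y : V} (h : ¬ R G v x y) :
    G.dist x v + G.dist v y = G.dist x y := by
  obtain ⟨p, hp⟩ := hc.exists_walk_length_eq_dist x y
  by_cases hv : v ∈ p.support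
  · obtain ⟨q, r, rfl⟩ := Walk.mem_support_iff_exists_append.1 hv
    have h1 := dist_le q
    have h2 := dist_le r
    have h3 : G.dist x y ≤ G.dist x v + G.dist v y := hc.dist_triangle
    rw [Walk.length_append] at hp
    omega
  · exact absurd (R_of_walk p hv) h

/-- The key local property of block graphs. -/
def PP (G : SimpleGraph V) : Prop :=
  ∀ v x y, G.Adj v x → G.Adj v y → x ≠ y → R G v x y → G.Adj x y

lemma conn_of_walks {G : SimpleGraph V} {s : Set V} (u : V) (hu : u ∈ s)
    (h : ∀ w ∈ s, ∃ p : G.Walk u w, ∀ a ∈ p.support, a ∈ s) : (G.induce s).Connected := by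
  refine G.induce_connected_of_patches u hu ?_
  intro w hw
  obtain ⟨p, hp⟩ := h w hw
  exact ⟨{a | a ∈ p.support}, hp, p.start_mem_support, p.end_mem_support,
    p.connected_induce_support _ _⟩

lemma PP_of_block [Finite V] {G : SimpleGraph V} (hG : IsBlockGraph G) : PP G := by
  classical
  intro v x y hx hy hxy hR
  obtain ⟨p0, hp0⟩ := walk_of_R hR hx.ne'
  obtain ⟨p, hp, hvp⟩ : ∃ p : G.Walk x y, p.IsPath ∧ v ∉ p.support :=
    ⟨p0.bypass, p0.bypass_isPath, fun h => hp0 (p0.support_bypass_subset_support h)⟩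
  have hcand : IsBlockCandidate G (insert v {a | a ∈ p.support}) := by
    have key : ∀ w ∈ p.support, ∀ z, z ≠ w → z ≠ v → ∃ q : G.Walk v w,
        ∀ a ∈ q.support, a ∈ (insert v {a | a ∈ p.support} : Set V) \ {z} := by
      intro w hw z hzw hzv
      obtain ⟨q, r, rfl⟩ := Walk.mem_support_iff_exists_append.1 hw
      by_cases hz : z ∈ q.support
      · have hzr : z ∉ r.support := by
          intro hzr
          have hn := hp.support_nodup
          rw [Walk.support_append, List.nodup_append] at hn
          rw [Walk.mem_support_iff] at hzr
          exact hn.2.2 z hz z (hzr.resolve_left hzw) rfl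
        refine ⟨Walk.cons hy r.reverse, ?_⟩
        intro a ha
        rw [Walk.support_cons, List.mem_cons, Walk.support_reverse, List.mem_reverse] at ha
        rcases ha with rfl | ha
        · exact ⟨Set.mem_insert _ _, fun h => hzv h.symm⟩
        · refine ⟨Set.mem_insert_of_mem _ ?_, ?_⟩
          · exact Walk.mem_support_append_iff _ _ |>.2 (Or.inr ha)
          · rintro rfl
            exact hzr ha
      · refine ⟨Walk.cons hx q, ?_⟩
        intro a ha
        rw [Walk.support_cons, List.mem_cons] at ha
        rcases ha with rfl | ha
        · exact ⟨Set.mem_insert _ _, fun h => hzv h.symm⟩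
        · refine ⟨Set.mem_insert_of_mem _ ?_, ?_⟩
          · exact Walk.mem_support_append_iff _ _ |>.2 (Or.inl ha)
          · rintro rfl
            exact hz ha
    have key2 : ∀ z, z ≠ v →
        (G.induce ((insert v {a | a ∈ p.support} : Set V) \ {z})).Connected := by
      intro z hzv
      refine conn_of_walks v ⟨Set.mem_insert _ _, fun h => hzv h.symm⟩ ?_
      rintro w ⟨hw | hw, hwz⟩
      · subst hw
        refine ⟨Walk.nil, ?_⟩
        intro a ha
        rw [Walk.support_nil, List.mem_singleton] at ha
        subst ha
        exact ⟨Set.mem_insert _ _, fun h => hzv h.symm⟩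
      · exact key w hw z (fun h => hwz h.symm) hzv
    refine ⟨?_, ?_⟩
    · refine conn_of_walks v (Set.mem_insert _ _) ?_
      rintro w (rfl | hw)
      · refine ⟨Walk.nil, ?_⟩
        intro a ha
        rw [Walk.support_nil, List.mem_singleton] at ha
        subst ha
        exact Set.mem_insert _ _
      · by_cases hwx : w = x
        · subst hwx
          obtain ⟨q, hq⟩ := key w hw y (Ne.symm hxy) hy.ne'
          exact ⟨q, fun a ha => (hq a ha).1⟩
        · obtain ⟨q, hq⟩ := key w hw x (Ne.symm hwx) hx.ne'
          exact ⟨q, fun a ha => (hq a ha).1⟩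
    · rintro z hz
      right
      by_cases hzv : z = v
      · subst hzv
        have : (insert z {a | a ∈ p.support} : Set V) \ {z} = {a | a ∈ p.support} := by
          ext a
          constructor
          · rintro ⟨h | h, h'⟩
            · exact absurd h h'
            · exact h
          · intro h
            refine ⟨Or.inr h, ?_⟩
            rintro rfl
            exact hvp h
        rw [this]
        exact p.connected_induce_support
      · exact key2 z hzv
  obtain ⟨B, hB, hmax⟩ := (Set.toFinite {B | IsBlockCandidate G B}).exists_le_maximal hcand
  have hblock : IsBlock G B :=
    ⟨hmax.prop, fun B' hB' hle => (Set.Subset.antisymm hle (hmax.le_of_ge hB' hle)).symm⟩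
  exact hG.2 B hblock (hB (Or.inr p.start_mem_support)) (hB (Or.inr p.end_mem_support)) hxy

/-- All but at most one element of `S` lie in the component of `c` in `G - v`. -/
def Maj (G : SimpleGraph V) (v c : V) (S : Finset V) : Prop :=
  ∀ x ∈ S, ∀ y ∈ S, ¬ R G v c x → ¬ R G v c y → x = y

lemma card_le_of_maj [Fintype V] {G : SimpleGraph V} (hc : G.Connected) (hP : PP G)
    (S : Finset V) (h : ∀ v, ∃ c, c ≠ v ∧ Maj G v c S) : S.card ≤ G.cliqueNum := by
  classical
  choose c hcv hM using h
  have hne := hc.nonempty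
  obtain ⟨v, hv⟩ := Finite.exists_min (fun v => ({x | R G v (c v) x} : Set V).ncard)
  have hback : ∀ u, G.Adj v u → R G v (c v) u → R G u (c u) v := by
    intro u huv hu
    by_contra hcon
    have hlt : ({x | R G u (c u) x} : Set V) ⊂ {x | R G v (c v) x} := by
      refine (Set.ssubset_iff_of_subset ?_).2 ⟨u, hu, ?_⟩
      · intro x hx
        have hxv : ¬ R G u x v := fun h => hcon (Reachable.trans hx h)
        have hd := dist_of_not_R hc hxv
        have h1 : G.dist u v = 1 := dist_eq_one_iff_adj.2 huv.symm
        exact hu.trans (R_of_dist hc _ u rfl huv.ne' (by omega)).symm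
      · intro hx
        exact hcv u (R_self_eq (Reachable.symm hx))
    have := Set.ncard_lt_ncard hlt
    exact absurd (hv u) (by simpa using this)
  let K : Finset V := Finset.univ.filter (fun u => u = v ∨ (G.Adj v u ∧ R G v (c v) u))
  have hK : G.IsClique (K : Set V) := by
    intro a ha b hb hab
    simp only [K, Finset.coe_filter, Finset.mem_univ, true_and, Set.mem_ofPred_eq] at ha hb
    rcases ha with rfl | ⟨ha, ha'⟩
    · rcases hb with rfl | ⟨hb, _⟩
      · exact absurd rfl hab
      · exact hb
    · rcases hb with rfl | ⟨hb, hb'⟩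
      · exact ha.symm
      · exact hP v a b ha hb hab (ha'.symm.trans hb')
  have hex : ∀ x, ∃ u ∈ K, ¬ R G u (c u) x := by
    intro x
    by_cases hx : R G v (c v) x
    · have hxv : x ≠ v := by
        rintro rfl
        exact hcv x (R_self_eq hx.symm)
      obtain ⟨k, hk⟩ : ∃ k, G.dist x v = k + 1 :=
        ⟨G.dist x v - 1, by have := hc.pos_dist_of_ne hxv; omega⟩
      obtain ⟨u, huv, hd⟩ := exists_pred hc hk
      have hxu : R G v x u := R_of_dist hc _ u rfl huv.ne (by omega)
      have huC := hx.trans hxu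
      refine ⟨u, by simp only [K, Finset.mem_filter, Finset.mem_univ, true_and];
                    exact Or.inr ⟨huv.symm, huC⟩, ?_⟩
      intro hcon
      have hvx : R G u v x := (hback u huv.symm huC).symm.trans hcon
      have hux : u ≠ x := by
        rintro rfl
        exact huv.ne (R_self_eq hvx.symm).symm
      obtain ⟨j, rfl⟩ : ∃ j, k = j + 1 :=
        ⟨k - 1, by have := hc.pos_dist_of_ne hux.symm; omega⟩
      obtain ⟨w, hwu, hdw⟩ := exists_pred hc hd
      have hwx : R G u x w := R_of_dist hc _ w rfl hwu.ne (by omega)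
      have hvw : v ≠ w := by
        rintro rfl
        omega
      have hadj := hP u v w huv hwu.symm hvw (hvx.trans hwx)
      have h1 : G.dist w v = 1 := dist_eq_one_iff_adj.2 hadj.symm
      have h2 : G.dist x v ≤ G.dist x w + G.dist w v := hc.dist_triangle
      omega
    · exact ⟨v, by simp [K], hx⟩
  choose g hg hgR using hex
  refine le_trans (Finset.card_le_card_of_injOn g (fun x _ => hg x) ?_)
    (IsClique.card_le_cliqueNum (tc := hK))
  intro x hx y hy hxy
  refine hM (g x) x hx y hy (hgR x) ?_
  rw [hxy]
  exact hgR y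

lemma legal_symm [DecidableEq V] {G : SimpleGraph V} {S T : Finset V} (hS : IsGPSet G S)
    (h : LegalMove G S T) : LegalMove G T S := by
  obtain ⟨u, hu, v, hv, hadj, rfl, _⟩ := h
  refine ⟨v, Finset.mem_insert_self _ _, u, ?_, hadj.symm, ?_, hS⟩
  · simp [hadj.ne]
  · ext a
    by_cases h1 : a = u
    · subst h1
      simp [hu]
    · by_cases h2 : a = v
      · subst h2
        simp [hv, h1]
      · simp [h1, h2]

lemma legal_card [DecidableEq V] {G : SimpleGraph V} {S T : Finset V}
    (h : LegalMove G S T) : T.card = S.card := by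
  obtain ⟨u, hu, v, hv, hadj, rfl, _⟩ := h
  rw [Finset.card_insert_of_notMem (by simp [hv]), Finset.card_erase_add_one hu]

lemma gp_same {G : SimpleGraph V} (hc : G.Connected) {S : Finset V} (hS : IsGPSet G S)
    {v a b : V} (hv : v ∈ S) (ha : a ∈ S) (hb : b ∈ S) (hav : a ≠ v) (hbv : b ≠ v) :
    R G v a b := by
  by_contra hcon
  have hab : a ≠ b := by
    rintro rfl
    exact hcon (Reachable.refl _)
  exact hS a ha v hv b hb hav (Ne.symm hbv) hab (dist_of_not_R hc hcon)

lemma maj_step [DecidableEq V] {G : SimpleGraph V} (hc : G.Connected) {S T : Finset V}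
    (hS : IsGPSet G S) (hcard : 3 ≤ S.card) (h : LegalMove G S T) {v c : V} (hcv : c ≠ v)
    (hM : Maj G v c S) : Maj G v c T := by
  have hcT := legal_card h
  obtain ⟨u, hu, w, hw, hadj, rfl, hT⟩ := h
  have hvC : ¬ R G v c v := fun h => hcv (R_self_eq h.symm)
  by_cases hwv : w = v
  · subst hwv
    have h2 : 1 < (S.erase u).card := by
      rw [Finset.card_erase_of_mem hu]
      omega
    obtain ⟨a, ha, b, hb, hab⟩ := Finset.one_lt_card.1 h2
    have hne : ∀ x ∈ S.erase u, x ≠ w := by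
      rintro x hx rfl
      exact hw (Finset.mem_of_mem_erase hx)
    have hex : ∃ d ∈ S.erase u, R G w c d := by
      by_contra hcon
      push Not at hcon
      exact hab (hM a (Finset.mem_of_mem_erase ha) b (Finset.mem_of_mem_erase hb)
        (hcon a ha) (hcon b hb))
    obtain ⟨d, hd, hcd⟩ := hex
    have hall : ∀ x ∈ S.erase u, R G w c x := fun x hx =>
      hcd.trans (gp_same hc hT (Finset.mem_insert_self _ _) (Finset.mem_insert_of_mem hd)
        (Finset.mem_insert_of_mem hx) (hne d hd) (hne x hx))
    intro x hx y hy hxn hyn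
    rcases Finset.mem_insert.1 hx with rfl | hx
    · rcases Finset.mem_insert.1 hy with rfl | hy
      · rfl
      · exact absurd (hall y hy) hyn
    · exact absurd (hall x hx) hxn
  · by_cases huv : u = v
    · subst huv
      have hall : ∀ x ∈ S.erase u, R G u c x := by
        intro x hx
        by_contra hcon
        exact (Finset.ne_of_mem_erase hx)
          (hM x (Finset.mem_of_mem_erase hx) u hu hcon hvC)
      intro x hx y hy hxn hyn
      rcases Finset.mem_insert.1 hx with rfl | hx
      · rcases Finset.mem_insert.1 hy with rfl | hy
        · rfl
        · exact absurd (hall y hy) hyn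
      · exact absurd (hall x hx) hxn
    · have huw : R G v u w := R_of_adj hadj huv hwv
      have hu' : ¬ R G v c w → ¬ R G v c u := fun h1 h2 => h1 (h2.trans huw)
      intro x hx y hy hxn hyn
      rcases Finset.mem_insert.1 hx with rfl | hx1
      · rcases Finset.mem_insert.1 hy with rfl | hy1
        · rfl
        · exact absurd (hM y (Finset.mem_of_mem_erase hy1) u hu hyn (hu' hxn))
            (Finset.ne_of_mem_erase hy1)
      · rcases Finset.mem_insert.1 hy with rfl | hy1
        · exact absurd (hM x (Finset.mem_of_mem_erase hx1) u hu hxn (hu' hyn))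
            (Finset.ne_of_mem_erase hx1)
        · exact hM x (Finset.mem_of_mem_erase hx1) y (Finset.mem_of_mem_erase hy1) hxn hyn

lemma upper [Fintype V] [DecidableEq V] {G : SimpleGraph V} (hc : G.Connected) (hP : PP G)
    {S : Finset V} (h : IsMobileGPSet G S) : S.card ≤ G.cliqueNum := by
  by_cases h3 : 3 ≤ S.card
  · obtain ⟨hS, m, f, hf0, hmove, hvis⟩ := h
    have hgp : ∀ i ≤ m, IsGPSet G (f i) ∧ (f i).card = S.card := by
      intro i
      induction i with
      | zero => exact fun _ => ⟨hf0 ▸ hS, by rw [hf0]⟩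
      | succ i ih =>
        intro hi
        have hmv := hmove i (by omega)
        refine ⟨?_, (legal_card hmv).trans (ih (by omega)).2⟩
        obtain ⟨_, _, _, _, _, _, hT⟩ := hmv
        exact hT
    refine card_le_of_maj hc hP S ?_
    intro v
    obtain ⟨i, hi, hvi⟩ := hvis v
    have hlt : 1 < (f i).card := by
      rw [(hgp i hi).2]
      omega
    obtain ⟨c, hci, hcv⟩ := Finset.exists_mem_ne hlt v
    refine ⟨c, hcv, ?_⟩
    have hMi : Maj G v c (f i) := by
      have : ∀ x ∈ f i, ¬ R G v c x → x = v := by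
        intro x hx hn
        by_contra hxv
        exact hn (gp_same hc (hgp i hi).1 hvi hci hx hcv hxv)
      intro x hx y hy hxn hyn
      rw [this x hx hxn, this y hy hyn]
    have hdesc : ∀ j ≤ m, Maj G v c (f j) → Maj G v c (f 0) := by
      intro j
      induction j with
      | zero => exact fun _ h => h
      | succ j ih =>
        intro hj hM
        refine ih (by omega) ?_
        exact maj_step hc (hgp (j+1) hj).1 (by rw [(hgp (j+1) hj).2]; exact h3)
          (legal_symm (hgp j (by omega)).1 (hmove j (by omega))) hcv hM
    rw [← hf0]
    exact hdesc i hi hMi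
  · by_cases h2 : S.card = 2
    · obtain ⟨a, b, hab, _⟩ := Finset.card_eq_two.1 h2
      obtain ⟨k, hk⟩ : ∃ k, G.dist a b = k + 1 :=
        ⟨G.dist a b - 1, by have := hc.pos_dist_of_ne hab; omega⟩
      obtain ⟨w, hw, _⟩ := exists_pred hc hk
      have hcl : G.IsClique (({w, b} : Finset V) : Set V) := by
        rw [Finset.coe_pair, isClique_pair]
        exact fun _ => hw
      have := IsClique.card_le_cliqueNum (tc := hcl)
      rw [Finset.card_pair hw.ne] at this
      omega
    · obtain ⟨a⟩ := hc.nonempty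
      have hcl : G.IsClique (({a} : Finset V) : Set V) := by
        rw [Finset.coe_singleton]
        exact isClique_singleton _
      have := IsClique.card_le_cliqueNum (tc := hcl)
      rw [Finset.card_singleton] at this
      omega

/-- A run of legal moves from `S` to `T` visiting all vertices of `W`. -/
def Tour [DecidableEq V] (G : SimpleGraph V) (S T : Finset V) (W : Finset V) : Prop :=
  ∃ (m : ℕ) (f : ℕ → Finset V), f 0 = S ∧ f m = T ∧
    (∀ i < m, LegalMove G (f i) (f (i + 1))) ∧ ∀ v ∈ W, ∃ i ≤ m, v ∈ f i

lemma Tour.step [DecidableEq V] {G : SimpleGraph V} {S T U W : Finset V}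
    (h : Tour G S T W) (hm : LegalMove G T U) : Tour G S U (W ∪ U) := by
  obtain ⟨m, f, h0, hmT, hmv, hvis⟩ := h
  refine ⟨m + 1, fun i => if i ≤ m then f i else U, by simpa using h0, by simp, ?_, ?_⟩
  · intro i hi
    by_cases him : i < m
    · have h1 : i ≤ m := by omega
      have h2 : i + 1 ≤ m := by omega
      simpa [h1, h2] using hmv i him
    · have : i = m := by omega
      subst this
      simpa [hmT] using hm
  · intro v hv
    rcases Finset.mem_union.1 hv with hv | hv
    · obtain ⟨i, hi, hvi⟩ := hvis v hv
      exact ⟨i, by omega, by simpa [hi] using hvi⟩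
    · exact ⟨m + 1, le_rfl, by simpa using hv⟩

lemma Tour.mono [DecidableEq V] {G : SimpleGraph V} {S T W W' : Finset V}
    (h : Tour G S T W) (hW : W' ⊆ W) : Tour G S T W' := by
  obtain ⟨m, f, h0, hmT, hmv, hvis⟩ := h
  exact ⟨m, f, h0, hmT, hmv, fun v hv => hvis v (hW hv)⟩

lemma Tour.chain [DecidableEq V] {G : SimpleGraph V} {S T U W : Finset V}
    (h : Tour G S T W) (hm : Relation.ReflTransGen (LegalMove G) T U) :
    Tour G S U W := by
  induction hm with
  | refl => exact h
  | tail _ hstep ih => exact (ih.step hstep).mono Finset.subset_union_left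

lemma Tour.visit_end [DecidableEq V] {G : SimpleGraph V} {S T W : Finset V}
    (h : Tour G S T W) : Tour G S T (W ∪ T) := by
  obtain ⟨m, f, h0, hmT, hmv, hvis⟩ := h
  refine ⟨m, f, h0, hmT, hmv, fun v hv => ?_⟩
  rcases Finset.mem_union.1 hv with hv | hv
  · exact hvis v hv
  · exact ⟨m, le_rfl, hmT ▸ hv⟩

lemma chain_symm [DecidableEq V] {G : SimpleGraph V} {S T : Finset V} (hS : IsGPSet G S)
    (h : Relation.ReflTransGen (LegalMove G) S T) :
    IsGPSet G T ∧ Relation.ReflTransGen (LegalMove G) T S := by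
  induction h with
  | refl => exact ⟨hS, Relation.ReflTransGen.refl⟩
  | tail _ hstep ih =>
    refine ⟨?_, Relation.ReflTransGen.head (legal_symm ih.1 hstep) ih.2⟩
    obtain ⟨_, _, _, _, _, _, hT⟩ := hstep
    exact hT

lemma gp_insert [DecidableEq V] {G : SimpleGraph V} (hc : G.Connected) {K : Finset V}
    (hK : G.IsClique (K : Set V)) {x : V} {d : ℕ} (hx : x ∉ K)
    (hd : ∀ y ∈ K, G.dist y x = d) : IsGPSet G (insert x K) := by
  have h1 : ∀ a ∈ K, ∀ b ∈ K, a ≠ b → G.dist a b = 1 := fun a ha b hb hab =>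
    dist_eq_one_iff_adj.2 (hK ha hb hab)
  have hd' : ∀ y ∈ K, G.dist x y = d := fun y hy => by rw [dist_comm]; exact hd y hy
  have hpos : ∀ y ∈ K, 0 < d := fun y hy => by
    rw [← hd y hy]
    exact hc.pos_dist_of_ne (by rintro rfl; exact hx hy)
  intro a ha b hb e he hab hbe hae
  rcases Finset.mem_insert.1 ha with rfl | ha1 <;> rcases Finset.mem_insert.1 hb with rfl | hb1 <;>
    rcases Finset.mem_insert.1 he with rfl | he1
  · exact absurd rfl hab
  · exact absurd rfl hab
  · exact absurd rfl hae
  · rw [hd' b hb1, hd' e he1, h1 b hb1 e he1 hbe]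
    omega
  · exact absurd rfl hbe
  · have := hpos a ha1
    rw [hd a ha1, hd' e he1, h1 a ha1 e he1 hae]
    omega
  · rw [hd a ha1, hd b hb1, h1 a ha1 b hb1 hab]
    omega
  · rw [h1 a ha1 b hb1 hab, h1 b hb1 e he1 hbe, h1 a ha1 e he1 hae]
    omega

lemma gp_clique {G : SimpleGraph V} {K : Finset V}
    (hK : G.IsClique (K : Set V)) : IsGPSet G K := by
  intro a ha b hb e he hab hbe hae
  rw [dist_eq_one_iff_adj.2 (hK ha hb hab), dist_eq_one_iff_adj.2 (hK hb he hbe),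
    dist_eq_one_iff_adj.2 (hK ha he hae)]
  omega

lemma chain_to [DecidableEq V] {G : SimpleGraph V} (hc : G.Connected) {K : Finset V}
    (hK : G.IsClique (K : Set V)) {b : V} (hb : b ∈ K) (k : ℕ) :
    ∀ x, G.dist b x = k → (∀ y ∈ K.erase b, G.dist y x = k + 1) →
      Relation.ReflTransGen (LegalMove G) K (insert x (K.erase b)) := by
  induction k with
  | zero =>
    intro x hx _
    rw [hc.dist_eq_zero_iff] at hx
    subst hx
    rw [Finset.insert_erase hb]
  | succ k ih =>
    intro x hx hy
    obtain ⟨w, hw, hdw⟩ := exists_pred hc hx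
    have hyw : ∀ y ∈ K.erase b, G.dist y w = k + 1 := by
      intro y hyK
      have h1 : G.dist y b = 1 := dist_eq_one_iff_adj.2
        (hK (Finset.mem_of_mem_erase hyK) hb (Finset.ne_of_mem_erase hyK))
      have h2 : G.dist y w ≤ G.dist y b + G.dist b w := hc.dist_triangle
      have h3 : G.dist y x ≤ G.dist y w + G.dist w x := hc.dist_triangle
      have h4 : G.dist w x = 1 := dist_eq_one_iff_adj.2 hw
      have h5 := hy y hyK
      omega
    have hwK : w ∉ K.erase b := fun h => by
      have := hyw w h
      simp at this
    have hxK : x ∉ K.erase b := fun h => by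
      have := hy x h
      simp at this
    refine (ih w hdw hyw).tail ⟨w, Finset.mem_insert_self _ _, x, ?_, hw, ?_, ?_⟩
    · rw [Finset.mem_insert, not_or]
      exact ⟨hw.ne', hxK⟩
    · rw [Finset.erase_insert hwK]
    · exact gp_insert hc (hK.subset (by simp)) hxK hy

lemma exists_gate [Fintype V] [DecidableEq V] {G : SimpleGraph V} (hc : G.Connected) (hP : PP G)
    {K : Finset V} (hK : G.IsNClique G.cliqueNum K) (hne : K.Nonempty) (x : V) :
    ∃ b ∈ K, ∀ y ∈ K.erase b, G.dist y x = G.dist b x + 1 := by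
  obtain ⟨b, hb, hmin⟩ := K.exists_min_image (fun y => G.dist y x) hne
  refine ⟨b, hb, ?_⟩
  intro y hy
  have hyK := Finset.mem_of_mem_erase hy
  have hyb := Finset.ne_of_mem_erase hy
  have hadj : G.Adj b y := hK.isClique hb hyK hyb.symm
  have h1 : G.dist y b = 1 := dist_eq_one_iff_adj.2 hadj.symm
  have h2 : G.dist y x ≤ G.dist y b + G.dist b x := hc.dist_triangle
  have h3 : G.dist b x ≤ G.dist y x := hmin y hyK
  by_contra hcon
  have heq : G.dist y x = G.dist b x := by omega
  have hpos : 0 < G.dist b x := by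
    by_contra h0
    have hb0 : b = x := hc.dist_eq_zero_iff.1 (by omega)
    have hy0 : y = x := hc.dist_eq_zero_iff.1 (by omega)
    exact hyb (hy0.trans hb0.symm)
  obtain ⟨k, hk⟩ : ∃ k, G.dist x b = k + 1 := ⟨G.dist x b - 1, by rw [dist_comm]; omega⟩
  obtain ⟨w, hw, hdw⟩ := exists_pred hc hk
  have hlt : G.dist w x < G.dist b x := by
    rw [dist_comm (u := w), dist_comm (u := b)]
    omega
  have hwK : w ∉ K := fun h => absurd (hmin w h) (by simpa using hlt)
  have hRy : R G b x y := R_of_dist hc _ y rfl hyb (by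
    rw [dist_comm, dist_comm (v := b)]; omega)
  have hRw : R G b x w := R_of_dist hc _ w rfl hw.ne (by
    rw [dist_comm, dist_comm (v := b)]; omega)
  have hall : ∀ z ∈ K, G.Adj w z := by
    intro z hz
    by_cases hzb : z = b
    · exact hzb ▸ hw
    · have hbz : G.Adj b z := hK.isClique hb hz (Ne.symm hzb)
      have hwz : w ≠ z := by
        rintro rfl
        exact hwK hz
      have hyz : R G b y z := by
        by_cases h : y = z
        · exact h ▸ Reachable.refl _
        · exact R_of_adj (hK.isClique hyK hz h) hyb hzb
      exact hP b w z hw.symm hbz hwz (hRw.symm.trans (hRy.trans hyz))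
  have hcl : G.IsClique ((insert w K : Finset V) : Set V) := by
    rw [Finset.coe_insert, isClique_insert]
    exact ⟨hK.isClique, fun z hz _ => hall z hz⟩
  have := IsClique.card_le_cliqueNum (tc := hcl)
  rw [Finset.card_insert_of_notMem hwK, hK.card_eq] at this
  omega

lemma lower [Fintype V] [DecidableEq V] {G : SimpleGraph V} (hc : G.Connected) (hP : PP G)
    {K : Finset V} (hK : G.IsNClique G.cliqueNum K) : IsMobileGPSet G K := by
  have hne : K.Nonempty := by
    obtain ⟨a⟩ := hc.nonempty
    have hcl : G.IsClique (({a} : Finset V) : Set V) := by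
      rw [Finset.coe_singleton]
      exact isClique_singleton _
    have := IsClique.card_le_cliqueNum (tc := hcl)
    rw [Finset.card_singleton, ← hK.card_eq] at this
    exact Finset.card_pos.1 this
  have hgp := gp_clique hK.isClique
  have htour : ∀ W : Finset V, Tour G K K W := by
    intro W
    induction W using Finset.induction_on with
    | empty => exact ⟨0, fun _ => K, rfl, rfl, by simp, by simp⟩
    | insert x W _ ih =>
      obtain ⟨b, hb, hgate⟩ := exists_gate hc hP hK hne x
      have hch := chain_to hc hK.isClique hb _ x rfl hgate
      refine ((ih.chain hch).visit_end.chain (chain_symm hgp hch).2).mono ?_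
      intro a ha
      rcases Finset.mem_insert.1 ha with rfl | ha
      · exact Finset.mem_union_right _ (Finset.mem_insert_self _ _)
      · exact Finset.mem_union_left _ ha
  obtain ⟨m, f, h0, _, hmv, hvis⟩ := htour Finset.univ
  exact ⟨hgp, m, f, h0, hmv, fun v => hvis v (Finset.mem_univ v)⟩

end MobBlock

/-- If `G` is a connected block graph, then `mob(G) = ω(G)`. -/
theorem stmt10 {V : Type*} [Fintype V] [DecidableEq V] (G : SimpleGraph V)
    (hG : IsBlockGraph G) : mob G = G.cliqueNum := by
  have hP := MobBlock.PP_of_block hG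
  apply le_antisymm
  · apply csSup_le'
    rintro n ⟨S, hS, rfl⟩
    exact MobBlock.upper hG.1 hP hS
  · obtain ⟨K, hK⟩ := G.exists_isNClique_cliqueNum
    refine le_csSup ⟨Fintype.card V, ?_⟩ ⟨K, MobBlock.lower hG.1 hP hK, hK.card_eq⟩
    rintro n ⟨S, _, rfl⟩
    exact S.card_le_univ
end

section
/- Let G be a connected unicyclic graph whose unique cycle has length ℓ, and suppose exactly k ≥ 2 vertices of the cycle have degree at least 3 in G. If both k and ℓ are even, then mob(G) ≤ k/2 + 2. -/
namespace Mob13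

open SimpleGraph

/-- clockwise cyclic difference from `b` to `a` -/
def cd (m a b : ℕ) : ℕ := if b ≤ a then a - b else a + 2 * m - b

/-- Structural data of a unicyclic graph with cycle of length `2 * m`. -/
structure Uni {V : Type*} [Fintype V] (G : SimpleGraph V) [DecidableRel G.Adj] (m : ℕ) where
  succ : V → V
  dep : V → ℕ
  pos : V → ℕ
  cyc : ℕ → V
  conn : G.Connected
  m_pos : 2 ≤ m
  adj_succ : ∀ v, G.Adj v (succ v)
  adj_cases : ∀ u v, G.Adj u v → v = succ u ∨ u = succ v
  dep_succ : ∀ v, dep v ≠ 0 → dep v = dep (succ v) + 1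
  pos_succ : ∀ v, dep v ≠ 0 → pos (succ v) = pos v
  pos_lt : ∀ v, pos v < 2 * m
  dep_cyc : ∀ i, i < 2 * m → dep (cyc i) = 0
  pos_cyc : ∀ i, i < 2 * m → pos (cyc i) = i
  eq_cyc : ∀ v, dep v = 0 → v = cyc (pos v)
  succ_cyc : ∀ v, dep v = 0 → succ v = cyc (if pos v + 1 = 2 * m then 0 else pos v + 1)
  deg : ∀ v, dep v ≠ 0 → 3 ≤ G.degree (cyc (pos v))

section
variable {V : Type*} [Fintype V] {G : SimpleGraph V} [DecidableRel G.Adj] {m : ℕ}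

lemma Uni.dep_succ0 (U : Uni G m) (v : V) (h : U.dep v = 0) : U.dep (U.succ v) = 0 := by
  have := U.pos_lt v
  have := U.m_pos
  rw [U.succ_cyc v h]
  apply U.dep_cyc
  split_ifs <;> omega

lemma Uni.pos_succ0 (U : Uni G m) (v : V) (h : U.dep v = 0) :
    U.pos (U.succ v) = if U.pos v + 1 = 2 * m then 0 else U.pos v + 1 := by
  have := U.pos_lt v
  have := U.m_pos
  rw [U.succ_cyc v h]
  apply U.pos_cyc
  split_ifs <;> omega

lemma Uni.dep_succ_le (U : Uni G m) (v : V) : U.dep (U.succ v) ≤ U.dep v := by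
  by_cases h : U.dep v = 0
  · rw [U.dep_succ0 v h]; omega
  · have := U.dep_succ v h; omega

/-- pseudo-distance -/
def Uni.D (U : Uni G m) (x v : V) : ℤ :=
  if U.pos v = U.pos x then (U.dep x : ℤ) - U.dep v
  else (U.dep x : ℤ) + (min (cd m (U.pos v) (U.pos x)) (cd m (U.pos x) (U.pos v)) : ℕ) + U.dep v

lemma Uni.D_step (U : Uni G m) (x u : V) : |U.D x (U.succ u) - U.D x u| ≤ 1 := by
  have h1 := U.pos_lt u
  have h2 := U.m_pos
  have h3 := U.pos_lt x
  by_cases h : U.dep u = 0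
  · have a := U.dep_succ0 u h
    have b := U.pos_succ0 u h
    simp only [Uni.D, cd, a, b, h]
    rw [abs_le]
    split_ifs <;> omega
  · have a := U.dep_succ u h
    have b := U.pos_succ u h
    simp only [Uni.D, b, a]
    rw [abs_le]
    split_ifs <;> push_cast <;> constructor <;> linarith

lemma Uni.D_adj (U : Uni G m) (x u v : V) (h : G.Adj u v) : U.D x v ≤ U.D x u + 1 := by
  rcases U.adj_cases u v h with rfl | rfl
  · have := abs_le.1 (U.D_step x u); linarith
  · have := abs_le.1 (U.D_step x v); linarith

lemma Uni.D_walk (U : Uni G m) (x : V) {u v : V} (w : G.Walk u v) :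
    U.D x v ≤ U.D x u + w.length := by
  induction w with
  | nil => simp
  | cons h p ih =>
    have := U.D_adj x _ _ h
    rw [Walk.length_cons]; push_cast; linarith

lemma Uni.dist_lower (U : Uni G m) (x z : V) (h : U.pos x ≠ U.pos z) :
    U.dep x + min (cd m (U.pos z) (U.pos x)) (cd m (U.pos x) (U.pos z)) + U.dep z ≤ G.dist x z := by
  obtain ⟨w, hw⟩ := U.conn.exists_walk_length_eq_dist x z
  have := U.D_walk x w
  rw [hw] at this
  simp only [Uni.D, if_neg h.symm, if_true] at this
  omega

lemma Uni.dist_cyc_le (U : Uni G m) (b n : ℕ) (h : b + n < 2 * m) :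
    G.dist (U.cyc b) (U.cyc (b + n)) ≤ n := by
  induction n with
  | zero => simp
  | succ n ih =>
    have h1 := ih (by omega)
    have h2 := U.adj_succ (U.cyc (b + n))
    rw [U.succ_cyc _ (U.dep_cyc _ (by omega)), U.pos_cyc _ (by omega), if_neg (by omega)] at h2
    have h3 := U.conn.dist_triangle (u := U.cyc b) (v := U.cyc (b+n)) (w := U.cyc (b+n+1))
    rw [SimpleGraph.dist_eq_one_iff_adj.2 h2] at h3
    rw [← add_assoc]
    omega

lemma Uni.dist_cyc (U : Uni G m) (a b : ℕ) (ha : a < 2 * m) (hb : b < 2 * m) :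
    G.dist (U.cyc b) (U.cyc a) ≤ cd m a b := by
  unfold cd
  split_ifs with h
  · have := U.dist_cyc_le b (a - b) (by omega)
    rwa [show b + (a - b) = a by omega] at this
  · have h1 := U.dist_cyc_le b (2 * m - 1 - b) (by omega)
    have h2 := U.adj_succ (U.cyc (2 * m - 1))
    have h4 := U.dist_cyc_le 0 a (by omega)
    rw [U.succ_cyc _ (U.dep_cyc _ (by omega)), U.pos_cyc _ (by omega), if_pos (by omega)] at h2
    rw [show b + (2 * m - 1 - b) = 2 * m - 1 by omega] at h1
    have h3 := U.conn.dist_triangle (u := U.cyc b) (v := U.cyc (2*m-1)) (w := U.cyc 0)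
    have h5 := U.conn.dist_triangle (u := U.cyc b) (v := U.cyc 0) (w := U.cyc a)
    rw [SimpleGraph.dist_eq_one_iff_adj.2 h2] at h3
    rw [zero_add] at h4
    omega

lemma Uni.dist_root (U : Uni G m) (n : ℕ) : ∀ v, U.dep v = n → G.dist v (U.cyc (U.pos v)) ≤ n := by
  induction n with
  | zero => intro v h; rw [← U.eq_cyc v h]; simp
  | succ n ih =>
    intro v h
    have h1 := U.dep_succ v (by omega)
    have h2 := ih (U.succ v) (by omega)
    rw [U.pos_succ v (by omega)] at h2
    have h3 := U.conn.dist_triangle (u := v) (v := U.succ v) (w := U.cyc (U.pos v))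
    rw [SimpleGraph.dist_eq_one_iff_adj.2 (U.adj_succ v)] at h3
    omega

/-- Key cyclic condition around an on-cycle robot. -/
lemma Uni.key (U : Uni G m) (S : Finset V) (hS : IsGPSet G S)
    (hinj : ∀ x ∈ S, ∀ y ∈ S, U.pos x = U.pos y → x = y)
    (x y z : V) (hx : x ∈ S) (hy : y ∈ S) (hz : z ∈ S) (hxy : x ≠ y) (hyz : y ≠ z) (hxz : x ≠ z)
    (h0 : U.dep y = 0) :
    m < cd m (U.pos x) (U.pos y) + cd m (U.pos y) (U.pos z) := by
  by_contra hc
  have e1 : U.pos x ≠ U.pos y := fun h => hxy (hinj _ hx _ hy h)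
  have e2 : U.pos y ≠ U.pos z := fun h => hyz (hinj _ hy _ hz h)
  have e3 : U.pos x ≠ U.pos z := fun h => hxz (hinj _ hx _ hz h)
  have l := U.dist_lower x z e3
  have t := U.conn.dist_triangle (u := x) (v := y) (w := z)
  have t1 := U.conn.dist_triangle (u := x) (v := U.cyc (U.pos x)) (w := y)
  have t2 := U.conn.dist_triangle (u := y) (v := U.cyc (U.pos z)) (w := z)
  have r1 := U.dist_root _ x rfl
  have r2 := U.dist_root _ z rfl
  have c1 := U.dist_cyc (U.pos x) (U.pos y) (U.pos_lt _) (U.pos_lt _)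
  have c2 := U.dist_cyc (U.pos y) (U.pos z) (U.pos_lt _) (U.pos_lt _)
  rw [← U.eq_cyc y h0] at c1 c2
  rw [SimpleGraph.dist_comm] at c1 c2
  rw [SimpleGraph.dist_comm] at r2
  have p1 := U.pos_lt x
  have p2 := U.pos_lt y
  have p3 := U.pos_lt z
  have hm := U.m_pos
  have hmin : min (cd m (U.pos z) (U.pos x)) (cd m (U.pos x) (U.pos z))
      = cd m (U.pos x) (U.pos y) + cd m (U.pos y) (U.pos z) := by
    unfold cd at hc ⊢
    split_ifs at hc ⊢ <;> omega
  apply hS x hx y hy z hz hxy hyz hxz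
  omega

end

section sepsec
variable {V : Type*} {G : SimpleGraph V}

/-- every walk from `x` to `y` passes through `q` -/
def Sep (G : SimpleGraph V) (q x y : V) : Prop := ∀ w : G.Walk x y, q ∈ w.support

lemma Sep.symm {q x y : V} (h : Sep G q x y) : Sep G q y x := by
  intro w
  have := h w.reverse
  simpa using this

lemma Sep.left (q y : V) : Sep G q q y := fun w => w.start_mem_support

lemma Sep.right (q y : V) : Sep G q y q := fun w => w.end_mem_support

lemma Sep.move {q a a' b : V} (h : Sep G q a b) (hq : q ≠ a) (ha : G.Adj a a') : Sep G q a' b := by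
  intro w
  have := h (Walk.cons ha w)
  rw [Walk.support_cons, List.mem_cons] at this
  exact this.resolve_left hq

lemma Sep.dist [DecidableEq V] (hG : G.Connected) {q a b : V} (h : Sep G q a b) :
    G.dist a q + G.dist q b = G.dist a b := by
  obtain ⟨w, hw⟩ := hG.exists_walk_length_eq_dist a b
  have h1 := h w
  have h2 := congrArg Walk.length (w.take_spec h1)
  rw [Walk.length_append, hw] at h2
  have h3 := SimpleGraph.dist_le (w.takeUntil q h1)
  have h4 := SimpleGraph.dist_le (w.dropUntil q h1)
  have h5 := hG.dist_triangle (u := a) (v := q) (w := b)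
  omega

/-- three robots pairwise separated by `q` -/
def Tri (G : SimpleGraph V) (q : V) (S : Finset V) : Prop :=
  ∃ a ∈ S, ∃ b ∈ S, ∃ d ∈ S, a ≠ b ∧ b ≠ d ∧ a ≠ d ∧ Sep G q a b ∧ Sep G q b d ∧ Sep G q a d

lemma Tri.not_mem [DecidableEq V] (hG : G.Connected) {q : V} {S : Finset V} (hS : IsGPSet G S)
    (h : Tri G q S) : q ∉ S := by
  intro hq
  obtain ⟨a, ha, b, hb, d, hd, hab, hbd, had, s1, s2, s3⟩ := h
  by_cases h1 : q = a
  · subst h1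
    exact hS b hb q hq d hd hab.symm had hbd (s2.dist hG)
  by_cases h2 : q = b
  · subst h2
    exact hS a ha q hq d hd hab hbd had (s3.dist hG)
  exact hS a ha q hq b hb (Ne.symm h1) h2 hab (s1.dist hG)

/-- symmetric version of a legal move -/
def Step [DecidableEq V] (G : SimpleGraph V) (S T : Finset V) (u v : V) : Prop :=
  IsGPSet G S ∧ IsGPSet G T ∧ u ∈ S ∧ v ∉ S ∧ G.Adj u v ∧ T = insert v (S.erase u)

lemma Step.symm [DecidableEq V] {S T : Finset V} {u v : V} (h : Step G S T u v) :
    Step G T S v u := by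
  obtain ⟨h1, h2, h3, h4, h5, rfl⟩ := h
  have hne := h5.ne
  refine ⟨h2, h1, by simp, by simp [hne], h5.symm, ?_⟩
  rw [Finset.erase_insert (by simp [h4]), Finset.insert_erase h3]

lemma Tri.step [DecidableEq V] (hG : G.Connected) {q : V} {S T : Finset V} {u v : V}
    (h : Step G S T u v) (ht : Tri G q S) : Tri G q T := by
  have hq := ht.not_mem hG h.1
  obtain ⟨h1, h2, h3, h4, h5, rfl⟩ := h
  obtain ⟨a, ha, b, hb, d, hd, hab, hbd, had, s1, s2, s3⟩ := ht
  have key : ∀ x ∈ S, ∀ y ∈ S, x ≠ y → Sep G q x y →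
      Sep G q (if x = u then v else x) (if y = u then v else y) := by
    intro x hx y hy hxy hs
    have qx : q ≠ x := fun h => hq (h ▸ hx)
    have qy : q ≠ y := fun h => hq (h ▸ hy)
    split_ifs with e1 e2 e2
    · exact absurd (e1.trans e2.symm) hxy
    · subst e1; exact hs.move qx h5
    · subst e2; exact (hs.symm.move qy h5).symm
    · exact hs
  have keyne : ∀ x ∈ S, ∀ y ∈ S, x ≠ y →
      (if x = u then v else x) ≠ (if y = u then v else y) := by
    intro x hx y hy hxy
    have qx : v ≠ x := fun h => h4 (h ▸ hx)
    have qy : v ≠ y := fun h => h4 (h ▸ hy)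
    split_ifs with e1 e2 e2
    · exact absurd (e1.trans e2.symm) hxy
    · exact qy
    · exact qx.symm
    · exact hxy
  have keymem : ∀ x ∈ S, (if x = u then v else x) ∈ insert v (S.erase u) := by
    intro x hx
    split_ifs with e <;> simp [e, hx]
  exact ⟨_, keymem a ha, _, keymem b hb, _, keymem d hd, keyne a ha b hb hab,
    keyne b hb d hd hbd, keyne a ha d hd had, key a ha b hb hab s1, key b hb d hd hbd s2,
    key a ha d hd had s3⟩

/-- invariants that are preserved by steps hold along the whole sequence -/
lemma run_inv [DecidableEq V] (M : ℕ) (f : ℕ → Finset V) (hgp : IsGPSet G (f 0))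
    (hf : ∀ i < M, LegalMove G (f i) (f (i + 1))) (P : Finset V → Prop)
    (hP : ∀ i j u v, i ≤ M → j ≤ M → Step G (f i) (f j) u v → P (f i) → P (f j)) :
    ∀ i ≤ M, (P (f i) ↔ P (f 0)) := by
  have gp : ∀ i ≤ M, IsGPSet G (f i) := by
    intro i hi
    cases i with
    | zero => exact hgp
    | succ i =>
      obtain ⟨u, hu, v, hv, ha, he, hg⟩ := hf i (by omega)
      exact hg
  intro i
  induction i with
  | zero => intro _; rfl
  | succ i ih =>
    intro hi
    rw [← ih (by omega)]
    obtain ⟨u, hu, v, hv, ha, he, hg⟩ := hf i (by omega)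
    have st : Step G (f i) (f (i+1)) u v := ⟨gp i (by omega), hg, hu, hv, ha, he⟩
    exact ⟨hP _ _ _ _ hi (by omega) st.symm, hP _ _ _ _ (by omega) hi st⟩

end sepsec

section
variable {V : Type*} [Fintype V] {G : SimpleGraph V} [DecidableRel G.Adj] {m : ℕ}

/-- descendants -/
def Uni.sub (U : Uni G m) (a : V) : Set V := {v | ∃ n, U.succ^[n] v = a}

lemma Uni.sub_cross (U : Uni G m) (a u v : V) (h : G.Adj u v) (hu : u ∈ U.sub a)
    (hv : v ∉ U.sub a) : u = a ∧ v = U.succ a := by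
  rcases U.adj_cases u v h with rfl | rfl
  · obtain ⟨n, hn⟩ := hu
    cases n with
    | zero => simp at hn; simp [hn]
    | succ n =>
      exact absurd ⟨n, by rwa [Function.iterate_succ_apply] at hn⟩ hv
  · obtain ⟨n, hn⟩ := hu
    exact absurd ⟨n + 1, by rwa [Function.iterate_succ_apply]⟩ hv

lemma Uni.sub_dep (U : Uni G m) (a : V) (n : ℕ) : ∀ v, U.succ^[n] v = a → U.dep a ≠ 0 →
    v = a ∨ U.dep a < U.dep v := by
  induction n with
  | zero => intro v h _; left; simpa using h
  | succ n ih =>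
    intro v h h0
    right
    rw [Function.iterate_succ_apply] at h
    have h1 := ih _ h h0
    have h2 : U.dep a ≤ U.dep (U.succ v) := by
      rcases h1 with h1 | h1
      · rw [h1]
      · omega
    by_cases h3 : U.dep v = 0
    · rw [U.dep_succ0 v h3] at h2; omega
    · have := U.dep_succ v h3; omega

lemma Uni.median (U : Uni G m) [DecidableEq V] (N : ℕ) : ∀ a b d : V, U.dep a + U.dep b = N →
    U.pos a = U.pos b → ∃ q, Sep G q a b ∧ Sep G q b d ∧ Sep G q a d := by
  induction N using Nat.strong_induction_on with
  | _ N ih =>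
  have main : ∀ a b d : V, U.dep a + U.dep b = N → U.dep b ≤ U.dep a →
    U.pos a = U.pos b → ∃ q, Sep G q a b ∧ Sep G q b d ∧ Sep G q a d := by
    intro a b d hN hle hp
    by_cases hab : a = b
    · subst hab
      exact ⟨a, Sep.left _ _, Sep.left _ _, Sep.left _ _⟩
    have ha0 : U.dep a ≠ 0 := by
      intro h
      apply hab
      rw [U.eq_cyc a h, U.eq_cyc b (by omega), hp]
    have hbs : b ∉ U.sub a := by
      rintro ⟨n, hn⟩
      rcases U.sub_dep a n b hn ha0 with h | h
      · exact hab h.symm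
      · omega
    have has : a ∈ U.sub a := ⟨0, rfl⟩
    by_cases hd : d ∈ U.sub a
    · refine ⟨a, Sep.left _ _, ?_, Sep.left _ _⟩
      apply Sep.symm
      intro w
      obtain ⟨e, he, h1, h2⟩ := w.exists_boundary_dart (U.sub a) hd hbs
      have := (U.sub_cross a _ _ e.adj h1 h2).1
      rw [← this]
      exact w.dart_fst_mem_support_of_mem_darts he
    · have lift : ∀ y q, y ∉ U.sub a → Sep G q (U.succ a) y → Sep G q a y := by
        intro y q hy hs w
        obtain ⟨e, he, h1, h2⟩ := w.exists_boundary_dart (U.sub a) has hy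
        have h3 := (U.sub_cross a _ _ e.adj h1 h2).2
        have h4 : U.succ a ∈ w.support := by
          rw [← h3]
          exact w.dart_snd_mem_support_of_mem_darts he
        exact w.support_dropUntil_subset_support h4 (hs (w.dropUntil _ h4))
      have hs := U.dep_succ a ha0
      obtain ⟨q, q1, q2, q3⟩ := ih (U.dep (U.succ a) + U.dep b) (by omega) (U.succ a) b d rfl
        (by rw [U.pos_succ a ha0, hp])
      exact ⟨q, lift _ _ hbs q1, q2, lift _ _ hd q3⟩
  intro a b d hN hp
  rcases le_total (U.dep b) (U.dep a) with h | h
  · exact main a b d hN h hp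
  · obtain ⟨q, q1, q2, q3⟩ := main b a d (by omega) h hp.symm
    exact ⟨q, q1.symm, q3, q2⟩

lemma Step.card {V : Type*} {G : SimpleGraph V} [DecidableEq V] {S T : Finset V} {u v : V} (h : Step G S T u v) :
    T.card = S.card := by
  obtain ⟨h1, h2, h3, h4, h5, rfl⟩ := h
  rw [Finset.card_insert_of_notMem (by simp [h4]), Finset.card_erase_of_mem h3]
  have := Finset.card_pos.2 ⟨u, h3⟩
  omega

lemma run_card {V : Type*} {G : SimpleGraph V} [DecidableEq V] (M : ℕ) (f : ℕ → Finset V) (hgp : IsGPSet G (f 0))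
    (hf : ∀ i < M, LegalMove G (f i) (f (i + 1))) : ∀ i ≤ M, (f i).card = (f 0).card := by
  intro i hi
  exact (run_inv M f hgp hf (fun S => S.card = (f 0).card)
    (fun i j u v _ _ h h1 => (h.card).trans h1) i hi).2 rfl

lemma run_gp {V : Type*} {G : SimpleGraph V} [DecidableEq V] (M : ℕ) (f : ℕ → Finset V) (hgp : IsGPSet G (f 0))
    (hf : ∀ i < M, LegalMove G (f i) (f (i + 1))) : ∀ i ≤ M, IsGPSet G (f i) := by
  intro i hi
  exact (run_inv M f hgp hf (fun S => IsGPSet G S)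
    (fun i j u v _ _ h h1 => h.2.1) i hi).2 hgp

/-- Each pendant tree contains at most one robot at any time. -/
lemma Uni.run_inj (U : Uni G m) [DecidableEq V] (M : ℕ) (f : ℕ → Finset V) (hgp : IsGPSet G (f 0))
    (hf : ∀ i < M, LegalMove G (f i) (f (i + 1)))
    (hall : ∀ v : V, ∃ i ≤ M, v ∈ f i) (hc : 3 ≤ (f 0).card) :
    ∀ i ≤ M, ∀ x ∈ f i, ∀ y ∈ f i, U.pos x = U.pos y → x = y := by
  intro i hi x hx y hy hp
  by_contra hne
  have hcard := run_card M f hgp hf i hi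
  obtain ⟨d, hd, hd1⟩ : ∃ d ∈ f i, d ∉ ({x, y} : Finset V) := by
    apply Finset.exists_mem_notMem_of_card_lt_card
    have := Finset.card_le_two (a := x) (b := y)
    omega
  simp only [Finset.mem_insert, Finset.mem_singleton, not_or] at hd1
  obtain ⟨q, q1, q2, q3⟩ := U.median _ x y d rfl hp
  have ht : Tri G q (f i) := ⟨x, hx, y, hy, d, hd, hne, Ne.symm hd1.2, Ne.symm hd1.1, q1, q2, q3⟩
  obtain ⟨j, hj, hqj⟩ := hall q
  have inv := run_inv M f hgp hf (fun S => Tri G q S) (fun i j u v _ _ h h1 => h1.step U.conn h)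
  have := (inv j hj).2 ((inv i hi).1 ht)
  exact this.not_mem U.conn (run_gp M f hgp hf j hj) hqj

end

section
variable {V : Type*} [Fintype V] {G : SimpleGraph V} [DecidableRel G.Adj] {m : ℕ}

/-- all pairs in opposite halves are of type `b` -/
def Uni.Pr (U : Uni G m) (b : Bool) (R : Finset V) : Prop :=
  ∀ x ∈ R, ∀ z ∈ R, U.pos x < m → m ≤ U.pos z →
    (if b = true then U.pos z < U.pos x + m else U.pos x + m < U.pos z)

/-- configuration `S` is of type `b`, with exempt robot `r` -/
def Uni.Ty (U : Uni G m) [DecidableEq V] (b : Bool) (S : Finset V) (r : V) : Prop :=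
  r ∈ S ∧ (U.dep r = 0 ∨ ∀ w ∈ S, U.dep w ≠ 0) ∧ U.Pr b (S.erase r)

/-- valid configurations -/
structure Uni.Val (U : Uni G m) (K : ℕ) (S : Finset V) : Prop where
  gp : IsGPSet G S
  inj : ∀ x ∈ S, ∀ y ∈ S, U.pos x = U.pos y → x = y
  card : K + 3 ≤ S.card
  four : 4 ≤ S.card

lemma cd_cases {m a b : ℕ} (ha : a < 2 * m) (hb : b < 2 * m) (h : a ≠ b) :
    (a < b ∧ cd m a b + b = a + 2 * m ∧ cd m b a + a = b) ∨
    (b < a ∧ cd m b a + a = b + 2 * m ∧ cd m a b + b = a) := by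
  unfold cd
  split_ifs <;> omega

lemma Uni.no_three (U : Uni G m) [DecidableEq V] {K : ℕ} {S : Finset V} (hv : U.Val K S)
    (p q r : V) (hp : p ∈ S) (hq : q ∈ S) (hr : r ∈ S) (hpq : p ≠ q) (hqr : q ≠ r) (hpr : p ≠ r)
    (p0 : U.dep p = 0) (q0 : U.dep q = 0) (r0 : U.dep r = 0) : False := by
  obtain ⟨s, hs, hs1⟩ : ∃ d ∈ S, d ∉ ({p, q, r} : Finset V) := by
    apply Finset.exists_mem_notMem_of_card_lt_card
    have := Finset.card_le_three (a := p) (b := q) (c := r)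
    have := hv.four
    omega
  simp only [Finset.mem_insert, Finset.mem_singleton, not_or] at hs1
  obtain ⟨s1, s2, s3⟩ := hs1
  have K := U.key S hv.gp hv.inj
  have a1 := K s p q hs hp hq s1 hpq s2 p0
  have a2 := K q p s hq hp hs hpq.symm (Ne.symm s1) (Ne.symm s2) p0
  have a3 := K s p r hs hp hr s1 hpr s3 p0
  have a4 := K r p s hr hp hs hpr.symm (Ne.symm s1) (Ne.symm s3) p0
  have b1 := K s q p hs hq hp s2 hpq.symm s1 q0
  have b2 := K p q s hp hq hs hpq (Ne.symm s2) (Ne.symm s1) q0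
  have b3 := K s q r hs hq hr s2 hqr s3 q0
  have b4 := K r q s hr hq hs hqr.symm (Ne.symm s2) (Ne.symm s3) q0
  have c1 := K s r p hs hr hp s3 hpr.symm s1 r0
  have c2 := K p r s hp hr hs hpr (Ne.symm s3) (Ne.symm s1) r0
  have c3 := K s r q hs hr hq s3 hqr.symm s2 r0
  have c4 := K q r s hq hr hs hqr (Ne.symm s3) (Ne.symm s2) r0
  have e1 : U.pos p ≠ U.pos q := fun h => hpq (hv.inj _ hp _ hq h)
  have e2 : U.pos q ≠ U.pos r := fun h => hqr (hv.inj _ hq _ hr h)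
  have e3 : U.pos p ≠ U.pos r := fun h => hpr (hv.inj _ hp _ hr h)
  have e4 : U.pos s ≠ U.pos p := fun h => s1 (hv.inj _ hs _ hp h)
  have e5 : U.pos s ≠ U.pos q := fun h => s2 (hv.inj _ hs _ hq h)
  have e6 : U.pos s ≠ U.pos r := fun h => s3 (hv.inj _ hs _ hr h)
  have l1 := U.pos_lt p
  have l2 := U.pos_lt q
  have l3 := U.pos_lt r
  have l4 := U.pos_lt s
  rcases cd_cases l1 l2 e1 with h1 | h1 <;> rcases cd_cases l2 l3 e2 with h2 | h2 <;>
  rcases cd_cases l1 l3 e3 with h3 | h3 <;> rcases cd_cases l4 l1 e4 with h4 | h4 <;>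
  rcases cd_cases l4 l2 e5 with h5 | h5 <;> rcases cd_cases l4 l3 e6 with h6 | h6 <;>
  omega

lemma Uni.on (U : Uni G m) [DecidableEq V] {K : ℕ} {S : Finset V} (hv : U.Val K S)
    (y : V) (hy : y ∈ S) (y0 : U.dep y = 0) : U.Ty true S y ∨ U.Ty false S y := by
  by_contra hc
  simp only [Uni.Ty, hy, y0, true_and, true_or, not_or, Uni.Pr, not_forall, if_true] at hc
  obtain ⟨⟨x, hx, z, hz, h1, h2, h3⟩, ⟨x', hx', z', hz', h1', h2', h3'⟩⟩ := hc
  simp only [Finset.mem_erase, Bool.false_eq_true, if_false] at *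
  have C : ∀ a b, a ≠ y → a ∈ S → b ≠ y → b ∈ S → (U.pos a ≠ U.pos b →
      m < cd m (U.pos a) (U.pos y) + cd m (U.pos y) (U.pos b)) := by
    intro a b a1 a2 b1 b2 hab
    exact U.key S hv.gp hv.inj a y b a2 hy b2 a1 (Ne.symm b1) (fun h => hab (by rw [h])) y0
  have c1 := C x z hx.1 hx.2 hz.1 hz.2
  have c2 := C z x hz.1 hz.2 hx.1 hx.2
  have c3 := C x' z' hx'.1 hx'.2 hz'.1 hz'.2
  have c4 := C z' x' hz'.1 hz'.2 hx'.1 hx'.2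
  have c5 := C x x' hx.1 hx.2 hx'.1 hx'.2
  have c6 := C x' x hx'.1 hx'.2 hx.1 hx.2
  have c7 := C z z' hz.1 hz.2 hz'.1 hz'.2
  have c8 := C z' z hz'.1 hz'.2 hz.1 hz.2
  have e1 : U.pos x ≠ U.pos y := fun h => hx.1 (hv.inj _ hx.2 _ hy h)
  have e2 : U.pos x' ≠ U.pos y := fun h => hx'.1 (hv.inj _ hx'.2 _ hy h)
  have e3 : U.pos z ≠ U.pos y := fun h => hz.1 (hv.inj _ hz.2 _ hy h)
  have e4 : U.pos z' ≠ U.pos y := fun h => hz'.1 (hv.inj _ hz'.2 _ hy h)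
  have l1 := U.pos_lt y
  have l3 := U.pos_lt z
  have l4 := U.pos_lt z'
  unfold cd at *
  clear C hv
  generalize U.pos x = X at *
  generalize U.pos x' = X' at *
  generalize U.pos y = Y at *
  generalize U.pos z = Z at *
  generalize U.pos z' = Z' at *
  by_cases f1 : X ≤ Y <;> by_cases f2 : X' ≤ Y <;> by_cases f3 : Z ≤ Y <;> by_cases f4 : Z' ≤ Y <;>
  split_ifs at * <;> omega

lemma Uni.ex (U : Uni G m) [DecidableEq V] {K : ℕ} {S : Finset V} (hv : U.Val K S)
    (hB1 : ((Finset.range m).filter (fun i => 3 ≤ G.degree (U.cyc i))).card ≤ K)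
    (hB2 : ((Finset.Ico m (2 * m)).filter (fun i => 3 ≤ G.degree (U.cyc i))).card ≤ K)
    (r r' : V) (h : U.Ty true S r) (h' : U.Ty false S r') : False := by
  obtain ⟨hr, hr0, hP⟩ := h
  obtain ⟨hr', hr0', hP'⟩ := h'
  let E := S.filter (fun w => U.dep w = 0 ∨ w = r ∨ w = r')
  have hE : E.card ≤ 2 := by
    by_contra hc
    obtain ⟨a, b, c, ha, hb, hc, hab, hac, hbc⟩ := Finset.two_lt_card_iff.1 (not_le.1 hc)
    simp only [E, Finset.mem_filter] at ha hb hc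
    by_cases hall : ∀ w ∈ S, U.dep w ≠ 0
    · have a1 := ha.2.resolve_left (hall _ ha.1)
      have b1 := hb.2.resolve_left (hall _ hb.1)
      have c1 := hc.2.resolve_left (hall _ hc.1)
      rcases a1 with rfl | rfl <;> rcases b1 with rfl | rfl <;> rcases c1 with rfl | rfl <;> simp_all
    · have g1 := hr0.resolve_right hall
      have g2 := hr0'.resolve_right hall
      have hz : ∀ w, (U.dep w = 0 ∨ w = r ∨ w = r') → U.dep w = 0 := by
        rintro w (h | rfl | rfl) <;> assumption
      exact U.no_three hv a b c ha.1 hb.1 hc.1 hab hbc hac (hz _ ha.2) (hz _ hb.2) (hz _ hc.2)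
  let Q := S \ E
  have hES : E ⊆ S := Finset.filter_subset _ _
  have hQ : K < Q.card := by
    have := Finset.card_sdiff_add_card_eq_card hES
    have := hv.card
    simp only [Q]; omega
  have hQm : ∀ x ∈ Q, x ∈ S ∧ U.dep x ≠ 0 ∧ x ≠ r ∧ x ≠ r' := by
    intro x hx
    simp only [Q, E, Finset.mem_sdiff, Finset.mem_filter] at hx
    tauto
  have hinj : Set.InjOn U.pos (Q : Set V) := by
    intro x hx y hy hxy
    exact hv.inj x (hQm x hx).1 y (hQm y hy).1 hxy
  have hex1 : ∃ x ∈ Q, U.pos x < m := by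
    by_contra hc
    push Not at hc
    have : Q.card ≤ K := by
      refine le_trans (Finset.card_le_card_of_injOn U.pos ?_ hinj) hB2
      intro x hx
      simp only [Finset.coe_filter, Finset.mem_Ico, Set.mem_ofPred_eq]
      exact ⟨⟨hc x hx, U.pos_lt x⟩, U.deg x (hQm x hx).2.1⟩
    omega
  have hex2 : ∃ x ∈ Q, m ≤ U.pos x := by
    by_contra hc
    push Not at hc
    have : Q.card ≤ K := by
      refine le_trans (Finset.card_le_card_of_injOn U.pos ?_ hinj) hB1
      intro x hx
      simp only [Finset.coe_filter, Finset.mem_range, Set.mem_ofPred_eq]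
      exact ⟨hc x hx, U.deg x (hQm x hx).2.1⟩
    omega
  obtain ⟨x, hx, hx1⟩ := hex1
  obtain ⟨z, hz, hz1⟩ := hex2
  have hx2 := hQm x hx
  have hz2 := hQm z hz
  have A := hP x (Finset.mem_erase.2 ⟨hx2.2.2.1, hx2.1⟩) z (Finset.mem_erase.2 ⟨hz2.2.2.1, hz2.1⟩) hx1 hz1
  have B := hP' x (Finset.mem_erase.2 ⟨hx2.2.2.2, hx2.1⟩) z (Finset.mem_erase.2 ⟨hz2.2.2.2, hz2.1⟩) hx1 hz1
  simp at A B
  omega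

lemma Uni.Pr_map (U : Uni G m) {b : Bool} {R R' : Finset V}
    (h : ∀ x ∈ R', ∃ y ∈ R, U.pos x = U.pos y) (hP : U.Pr b R) : U.Pr b R' := by
  intro x hx z hz h1 h2
  obtain ⟨y, hy, e⟩ := h x hx
  obtain ⟨w, hw, e'⟩ := h z hz
  rw [e, e']
  exact hP y hy w hw (e ▸ h1) (e' ▸ h2)

lemma Uni.ty_step (U : Uni G m) [DecidableEq V] {K : ℕ} {S T : Finset V} {u v : V}
    (hS : U.Val K S) (hT : U.Val K T)
    (hB1 : ((Finset.range m).filter (fun i => 3 ≤ G.degree (U.cyc i))).card ≤ K)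
    (hB2 : ((Finset.Ico m (2 * m)).filter (fun i => 3 ≤ G.degree (U.cyc i))).card ≤ K)
    (h : Step G S T u v) (ht : ∃ r, U.Ty true S r) : ∃ r, U.Ty true T r := by
  obtain ⟨r, hr⟩ := ht
  have ex := fun r' => U.ex hS hB1 hB2 r r' hr
  obtain ⟨_, _, hu, hv, ha, hTe⟩ := h
  have huv := ha.ne
  have hR : T.erase v = S.erase u := by
    rw [hTe, Finset.erase_insert (by simp [hv])]
  have hvT : v ∈ T := by simp [hTe]
  have memT : ∀ w, w ∈ T ↔ w = v ∨ (w ≠ u ∧ w ∈ S) := by simp [hTe]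
  by_cases hA : (U.dep u = 0 ∧ U.dep v = 0) ∨
      ((U.dep u = 0 ∨ U.dep v = 0) ∧ ∀ w ∈ S.erase u, U.dep w ≠ 0)
  · have hu' : U.dep u = 0 ∨ ∀ w ∈ S, U.dep w ≠ 0 := by
      by_cases h0 : U.dep u = 0
      · exact Or.inl h0
      · right
        intro w hw
        by_cases hwu : w = u
        · rwa [hwu]
        · rcases hA with hA | hA
          · exact absurd hA.1 h0
          · exact hA.2 w (Finset.mem_erase.2 ⟨hwu, hw⟩)
    have hv' : U.dep v = 0 ∨ ∀ w ∈ T, U.dep w ≠ 0 := by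
      by_cases h0 : U.dep v = 0
      · exact Or.inl h0
      · right
        intro w hw
        by_cases hwu : w = v
        · rwa [hwu]
        · rcases hA with hA | hA
          · exact absurd hA.2 h0
          · exact hA.2 w (hR ▸ Finset.mem_erase.2 ⟨hwu, hw⟩)
    have hPr : U.Pr true (S.erase u) ∨ U.Pr false (S.erase u) := by
      have : U.dep u = 0 ∨ U.dep v = 0 := by tauto
      rcases this with h0 | h0
      · rcases U.on hS u hu h0 with h | h
        · exact Or.inl h.2.2
        · exact Or.inr h.2.2
      · rw [← hR]
        rcases U.on hT v hvT h0 with h | h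
        · exact Or.inl h.2.2
        · exact Or.inr h.2.2
    rcases hPr with h | h
    · exact ⟨v, hvT, hv', by rwa [hR]⟩
    · exact (ex u ⟨hu, hu', h⟩).elim
  · have hpos : U.pos u = U.pos v := by
      have hn : ¬ (U.dep u = 0 ∧ U.dep v = 0) := fun h => hA (Or.inl h)
      rcases U.adj_cases u v ha with e | e
      · by_cases h0 : U.dep u = 0
        · exact absurd ⟨h0, e ▸ U.dep_succ0 u h0⟩ hn
        · rw [e, U.pos_succ u h0]
      · by_cases h0 : U.dep v = 0
        · exact absurd ⟨e ▸ U.dep_succ0 v h0, h0⟩ hn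
        · rw [e, U.pos_succ v h0]
    by_cases hw : ∃ w ∈ S.erase u, U.dep w = 0
    · obtain ⟨w, hw, w0⟩ := hw
      rw [Finset.mem_erase] at hw
      have hwT : w ∈ T := (memT w).2 (Or.inr hw)
      rcases U.on hT w hwT w0 with h | h
      · exact ⟨w, h⟩
      · refine (ex w ⟨hw.2, Or.inl w0, U.Pr_map ?_ h.2.2⟩).elim
        intro x hx
        rw [Finset.mem_erase] at hx
        by_cases hxu : x = u
        · refine ⟨v, Finset.mem_erase.2 ⟨fun h => hv (h ▸ hw.2), hvT⟩, by rw [hxu, hpos]⟩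
        · exact ⟨x, Finset.mem_erase.2 ⟨hx.1, (memT x).2 (Or.inr ⟨hxu, hx.2⟩)⟩, rfl⟩
    · push Not at hw
      have hn : U.dep u ≠ 0 ∧ U.dep v ≠ 0 := by
        constructor <;> intro h0 <;> exact hA (Or.inr ⟨by tauto, hw⟩)
      have hT0 : ∀ w ∈ T, U.dep w ≠ 0 := by
        intro w h
        rcases (memT w).1 h with rfl | h
        · exact hn.2
        · exact hw w (Finset.mem_erase.2 h)
      by_cases hru : r = u
      · refine ⟨v, hvT, Or.inr hT0, ?_⟩
        rw [hR, ← hru]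
        exact hr.2.2
      · refine ⟨r, (memT r).2 (Or.inr ⟨hru, hr.1⟩), Or.inr hT0, U.Pr_map ?_ hr.2.2⟩
        intro x hx
        rw [Finset.mem_erase] at hx
        rcases (memT x).1 hx.2 with rfl | h
        · exact ⟨u, Finset.mem_erase.2 ⟨Ne.symm hru, hu⟩, hpos.symm⟩
        · exact ⟨x, Finset.mem_erase.2 ⟨hx.1, h.2⟩, rfl⟩

lemma Uni.bound (U : Uni G m) [DecidableEq V] {K : ℕ} (hK : 1 ≤ K) {S : Finset V}
    (hB1 : ((Finset.range m).filter (fun i => 3 ≤ G.degree (U.cyc i))).card ≤ K)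
    (hB2 : ((Finset.Ico m (2 * m)).filter (fun i => 3 ≤ G.degree (U.cyc i))).card ≤ K)
    (h : IsMobileGPSet G S) : S.card ≤ K + 2 := by
  by_contra hcard
  push Not at hcard
  obtain ⟨hgp, M, f, rfl, hf, hall⟩ := h
  have hm := U.m_pos
  have hval : ∀ i ≤ M, U.Val K (f i) := by
    intro i hi
    have := run_card M f hgp hf i hi
    exact ⟨run_gp M f hgp hf i hi, U.run_inj M f hgp hf hall (by omega) i hi, by omega, by omega⟩
  have inv := run_inv M f hgp hf (fun S => ∃ r, U.Ty true S r)
    (fun i j u v hi hj h ht => U.ty_step (hval i hi) (hval j hj) hB1 hB2 h ht)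
  obtain ⟨i, hi, h0⟩ := hall (U.cyc 0)
  obtain ⟨j, hj, h1⟩ := hall (U.cyc m)
  have p0 := U.pos_cyc 0 (by omega)
  have p1 := U.pos_cyc m (by omega)
  have ti : ∃ r, U.Ty true (f i) r := by
    refine ⟨U.cyc 0, h0, Or.inl (U.dep_cyc 0 (by omega)), ?_⟩
    intro x hx z hz hx1 hz1
    rw [Finset.mem_erase] at hx hz
    have := U.key _ (hval i hi).gp (hval i hi).inj x (U.cyc 0) z hx.2 h0 hz.2 hx.1 (Ne.symm hz.1)
      (fun h => by rw [h] at hx1; omega) (U.dep_cyc 0 (by omega))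
    have := U.pos_lt z
    simp only [p0, if_true, cd] at *
    split_ifs at * <;> omega
  have tj : U.Ty false (f j) (U.cyc m) := by
    refine ⟨h1, Or.inl (U.dep_cyc m (by omega)), ?_⟩
    intro x hx z hz hx1 hz1
    rw [Finset.mem_erase] at hx hz
    have := U.key _ (hval j hj).gp (hval j hj).inj z (U.cyc m) x hz.2 h1 hx.2 hz.1 (Ne.symm hx.1)
      (fun h => by rw [h] at hz1; omega) (U.dep_cyc m (by omega))
    have := U.pos_lt z
    simp only [p1, cd, Bool.false_eq_true, if_false] at *
    split_ifs at * <;> omega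
  obtain ⟨r, hr⟩ := (inv j hj).2 ((inv i hi).1 ti)
  exact U.ex (hval j hj) hB1 hB2 _ _ hr tj

end

section
variable {V : Type*} [Fintype V] [DecidableEq V] {G : SimpleGraph V} [DecidableRel G.Adj] {m : ℕ}

theorem exists_uni (hG : G.Connected) (hE : G.edgeFinset.card = Fintype.card V) (hm : 2 ≤ m)
    (cyc : ℕ → V) (hinj : ∀ i < 2 * m, ∀ j < 2 * m, cyc i = cyc j → i = j)
    (hadj : ∀ i < 2 * m, G.Adj (cyc i) (cyc (if i + 1 = 2 * m then 0 else i + 1))) :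
    ∃ U : Uni G m, U.cyc = cyc := by
  obtain ⟨dep, hdep⟩ : ∃ dep : V → ℕ, ∀ v, (∃ i < 2 * m, G.dist v (cyc i) = dep v) ∧
      ∀ i < 2 * m, dep v ≤ G.dist v (cyc i) := by
    refine ⟨fun v => sInf {d | ∃ i < 2 * m, G.dist v (cyc i) = d}, fun v => ⟨?_, ?_⟩⟩
    · exact Nat.sInf_mem (s := {d | ∃ i < 2 * m, G.dist v (cyc i) = d}) ⟨_, 0, by omega, rfl⟩
    · intro i hi
      exact Nat.sInf_le ⟨i, hi, rfl⟩
  have hpar0 : ∀ v, ∃ u, dep v ≠ 0 → G.Adj v u ∧ dep v = dep u + 1 := by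
    intro v
    by_cases h0 : dep v = 0
    · exact ⟨v, fun h => absurd h0 h⟩
    obtain ⟨i, hi, hd⟩ := (hdep v).1
    obtain ⟨w, hw⟩ := hG.exists_walk_length_eq_dist v (cyc i)
    cases w with
    | nil => rw [SimpleGraph.dist_self] at hd; omega
    | @cons _ u _ ha p =>
      refine ⟨u, fun _ => ⟨ha, ?_⟩⟩
      rw [Walk.length_cons] at hw
      have h1 := SimpleGraph.dist_le p
      have h2 := (hdep u).2 i hi
      obtain ⟨j, hj, hdj⟩ := (hdep u).1
      have h3 := (hdep v).2 j hj
      have h4 := hG.dist_triangle (u := v) (v := u) (w := cyc j)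
      rw [SimpleGraph.dist_eq_one_iff_adj.2 ha] at h4
      omega
  choose par hpar using hpar0
  have hidx0 : ∀ v, ∃ i, dep v = 0 → i < 2 * m ∧ cyc i = v := by
    intro v
    obtain ⟨i, hi, hd⟩ := (hdep v).1
    refine ⟨i, fun h => ⟨hi, ?_⟩⟩
    rw [h] at hd
    exact (hG.dist_eq_zero_iff.1 hd).symm
  choose idx hidx using hidx0
  have dep_cyc : ∀ i < 2 * m, dep (cyc i) = 0 := by
    intro i hi
    have := (hdep (cyc i)).2 i hi
    simpa using this
  have idx_cyc : ∀ i < 2 * m, idx (cyc i) = i := by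
    intro i hi
    have := hidx (cyc i) (dep_cyc i hi)
    exact hinj _ this.1 _ hi this.2
  let nx : ℕ → ℕ := fun i => if i + 1 = 2 * m then 0 else i + 1
  have nx_lt : ∀ i < 2 * m, nx i < 2 * m := by
    intro i hi
    simp only [nx]; split_ifs <;> omega
  obtain ⟨succ, hs0, hs1⟩ : ∃ succ : V → V, (∀ v, dep v = 0 → succ v = cyc (nx (idx v))) ∧
      (∀ v, dep v ≠ 0 → succ v = par v) :=
    ⟨fun v => if dep v = 0 then cyc (nx (idx v)) else par v, fun v h => by simp [h],
      fun v h => by simp [h]⟩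
  have adj_succ : ∀ v, G.Adj v (succ v) := by
    intro v
    by_cases h : dep v = 0
    · rw [hs0 v h]
      have h1 := hidx v h
      have h2 := hadj _ h1.1
      rwa [h1.2] at h2
    · rw [hs1 v h]
      exact (hpar v h).1
  have dep_succ : ∀ v, dep v ≠ 0 → dep v = dep (succ v) + 1 := by
    intro v h
    rw [hs1 v h]
    exact (hpar v h).2
  have dep_succ0 : ∀ v, dep v = 0 → dep (succ v) = 0 := by
    intro v h
    rw [hs0 v h]
    exact dep_cyc _ (nx_lt _ (hidx v h).1)
  have idx_succ0 : ∀ v, dep v = 0 → idx (succ v) = nx (idx v) := by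
    intro v h
    rw [hs0 v h]
    exact idx_cyc _ (nx_lt _ (hidx v h).1)
  have inj : Function.Injective (fun v => (s(v, succ v) : Sym2 V)) := by
    intro v w h
    simp only [Sym2.eq_iff] at h
    rcases h with h | ⟨h1, h2⟩
    · exact h.1
    · exfalso
      by_cases hv : dep v = 0
      · have hw := dep_succ0 v hv
        rw [h2] at hw
        have e1 := idx_succ0 v hv
        have e2 := idx_succ0 w hw
        rw [h2] at e1
        rw [← h1] at e2
        have := (hidx v hv).1
        have := (hidx w hw).1
        simp only [nx] at e1 e2
        split_ifs at e1 e2 <;> omega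
      · have a := dep_succ v hv
        rw [h2] at a
        by_cases hw : dep w = 0
        · have := dep_succ0 w hw
          rw [← h1] at this
          exact hv this
        · have b := dep_succ w hw
          rw [← h1] at b
          omega
  have himg : Finset.univ.image (fun v => (s(v, succ v) : Sym2 V)) = G.edgeFinset := by
    apply Finset.eq_of_subset_of_card_le
    · intro e he
      obtain ⟨v, _, rfl⟩ := Finset.mem_image.1 he
      simpa using adj_succ v
    · rw [Finset.card_image_of_injective _ inj, hE, Finset.card_univ]
  have adj_cases : ∀ u v, G.Adj u v → v = succ u ∨ u = succ v := by
    intro u v h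
    have : s(u, v) ∈ G.edgeFinset := by simpa using h
    rw [← himg, Finset.mem_image] at this
    obtain ⟨w, _, hw⟩ := this
    rw [Sym2.eq_iff] at hw
    rcases hw with ⟨rfl, h2⟩ | ⟨rfl, h2⟩
    · exact Or.inl h2.symm
    · exact Or.inr h2.symm
  have dep_root : ∀ n v, dep v = n → dep (succ^[n] v) = 0 := by
    intro n
    induction n with
    | zero => intro v h; simpa using h
    | succ n ih =>
      intro v h
      rw [Function.iterate_succ_apply]
      apply ih
      have := dep_succ v (by omega)
      omega
  let pos : V → ℕ := fun v => idx (succ^[dep v] v)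
  have pos0 : ∀ v, dep v = 0 → pos v = idx v := by
    intro v h; simp [pos, h]
  have pos_succ : ∀ v, dep v ≠ 0 → pos (succ v) = pos v := by
    intro v h
    simp only [pos]
    rw [dep_succ v h, Function.iterate_succ_apply]
  have pos_lt : ∀ v, pos v < 2 * m := fun v => (hidx _ (dep_root _ v rfl)).1
  have eq_cyc : ∀ v, dep v = 0 → v = cyc (pos v) := by
    intro v h
    rw [pos0 v h, (hidx v h).2]
  have deg : ∀ n v, dep v = n + 1 → 3 ≤ G.degree (cyc (pos v)) := by
    intro n
    induction n with
    | zero =>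
      intro v h
      have h1 := dep_succ v (by omega)
      have h2 := eq_cyc (succ v) (by omega)
      rw [pos_succ v (by omega)] at h2
      have hp := pos_lt v
      obtain ⟨j, hj, hnj⟩ : ∃ j < 2 * m, nx j = pos v := by
        by_cases h0 : pos v = 0
        · exact ⟨2 * m - 1, by omega, by simp only [nx]; rw [if_pos (by omega), h0]⟩
        · exact ⟨pos v - 1, by omega, by simp only [nx]; rw [if_neg (by omega)]; omega⟩
      have n1 := hadj _ hp
      have n2 := hadj j hj
      change G.Adj _ (cyc (nx _)) at n1 n2
      rw [hnj] at n2
      have n3 := adj_succ v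
      rw [h2] at n3
      have d1 : cyc (nx (pos v)) ≠ cyc j := by
        intro h
        have := hinj _ (nx_lt _ hp) _ hj h
        rw [← hnj] at this
        simp only [nx] at this
        split_ifs at this <;> omega
      have dv : ∀ i < 2 * m, v ≠ cyc i := by
        intro i hi h'
        have := dep_cyc i hi
        rw [← h'] at this
        omega
      have hsub : ({v, cyc (nx (pos v)), cyc j} : Finset V) ⊆ G.neighborFinset (cyc (pos v)) := by
        intro x hx
        simp only [Finset.mem_insert, Finset.mem_singleton] at hx
        rw [SimpleGraph.mem_neighborFinset]
        rcases hx with rfl | rfl | rfl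
        · exact n3.symm
        · exact n1
        · exact n2.symm
      rw [← SimpleGraph.card_neighborFinset_eq_degree]
      refine le_trans (le_of_eq ?_) (Finset.card_le_card hsub)
      rw [Finset.card_eq_three.2 ⟨_, _, _, dv _ (nx_lt _ hp), dv _ hj, d1, rfl⟩]
    | succ n ih =>
      intro v h
      have h1 := dep_succ v (by omega)
      rw [← pos_succ v (by omega)]
      exact ih _ (by omega)
  exact ⟨{ succ := succ, dep := dep, pos := pos, cyc := cyc, conn := hG, m_pos := hm,
           adj_succ := adj_succ, adj_cases := adj_cases, dep_succ := dep_succ,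
           pos_succ := pos_succ, pos_lt := pos_lt, dep_cyc := dep_cyc,
           pos_cyc := fun i hi => by rw [pos0 _ (dep_cyc i hi), idx_cyc i hi]
           eq_cyc := eq_cyc
           succ_cyc := fun v h => by rw [hs0 v h, pos0 v h]
           deg := fun v h => deg (dep v - 1) v (by omega) }, rfl⟩

end

/-- Discrete intermediate value argument: a balanced diameter exists. -/
lemma balanced (p : ℕ → ℕ) (hp1 : ∀ i, p i ≤ 1) (m K : ℕ) (hper : ∀ i, p (i + 2 * m) = p i)
    (hsum : ∑ i ∈ Finset.range (2 * m), p i = 2 * K) :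
    ∃ g, ∑ i ∈ Finset.range m, p (g + i) = K ∧ ∑ i ∈ Finset.range m, p (g + m + i) = K := by
  let h : ℕ → ℕ := fun g => ∑ i ∈ Finset.range m, p (g + i)
  have tel : ∀ g, h (g + 1) + p g = h g + p (g + m) := by
    intro g
    have h1 := Finset.sum_range_succ (fun i => p (g + i)) m
    have h2 := Finset.sum_range_succ' (fun i => p (g + i)) m
    simp only [h]
    have h3 : ∑ i ∈ Finset.range m, p (g + 1 + i) = ∑ i ∈ Finset.range m, p (g + (i + 1)) := by
      refine Finset.sum_congr rfl fun i _ => ?_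
      congr 1; omega
    simp only [add_zero] at h2
    omega
  have tot : ∀ g, h g + h (g + m) = 2 * K := by
    intro g
    induction g with
    | zero =>
      rw [← hsum, two_mul, Finset.sum_range_add]
      simp [h]
    | succ g ih =>
      have t1 := tel g
      have t2 := tel (g + m)
      have t3 := hper g
      rw [show g + 2 * m = g + m + m by omega] at t3
      rw [show g + 1 + m = g + m + 1 by omega]
      omega
  suffices ∃ g, h g = K by
    obtain ⟨g, hg⟩ := this
    have := tot g
    exact ⟨g, hg, by change h (g + m) = K; omega⟩
  by_contra hne
  push Not at hne
  have t0 := tot 0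
  rw [zero_add] at t0
  have up : h 0 < K → ∀ g, h g < K := by
    intro h0 g
    induction g with
    | zero => exact h0
    | succ g ih =>
      have := tel g
      have := hp1 (g + m)
      have := hne (g + 1)
      omega
  have down : K < h 0 → ∀ g, K < h g := by
    intro h0 g
    induction g with
    | zero => exact h0
    | succ g ih =>
      have := tel g
      have := hp1 g
      have := hne (g + 1)
      omega
  rcases lt_or_gt_of_ne (hne 0) with h0 | h0
  · have := up h0 m; omega
  · have := down h0 m; omega

end Mob13

/-- Let `G` be a connected unicyclic graph (connected with as many edges as
vertices) whose unique cycle `c` has length `ℓ`, and suppose exactly `k ≥ 2`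
vertices of the cycle have degree at least 3 in `G`. If both `k` and `ℓ` are
even, then `mob(G) ≤ k / 2 + 2`. -/
theorem stmt13 {V : Type*} [Fintype V] [DecidableEq V] (G : SimpleGraph V)
    [DecidableRel G.Adj] (hG : G.Connected)
    (hedges : G.edgeFinset.card = Fintype.card V)
    {v₀ : V} (c : G.Walk v₀ v₀) (hc : c.IsCycle)
    (ℓ k : ℕ) (hℓ : c.length = ℓ)
    (hk : k = (c.support.toFinset.filter (fun u => 3 ≤ G.degree u)).card)
    (hk2 : 2 ≤ k) (hkeven : Even k) (hℓeven : Even ℓ) :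
    mob G ≤ k / 2 + 2 := by
  classical
  subst hℓ
  obtain ⟨K, hK⟩ := hkeven
  obtain ⟨m, hm⟩ := hℓeven
  have h3 := hc.three_le_length
  have hm2 : 2 ≤ m := by omega
  have hl : c.length = 2 * m := by omega
  let cyc0 : ℕ → V := fun i => c.getVert (i % c.length)
  have per : ∀ i, cyc0 (i + 2 * m) = cyc0 i := by
    intro i
    simp [cyc0, hl]
  have adj0 : ∀ i, G.Adj (cyc0 i) (cyc0 (i + 1)) := by
    intro i
    have hlt : i % c.length < c.length := Nat.mod_lt _ (by omega)
    have h1 := c.adj_getVert_succ hlt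
    have h2 : c.getVert ((i + 1) % c.length) = c.getVert (i % c.length + 1) := by
      rw [Nat.add_mod, Nat.mod_eq_of_lt (show 1 < c.length by omega)]
      by_cases h : i % c.length + 1 = c.length
      · rw [h, Nat.mod_self, c.getVert_length, c.getVert_zero]
      · rw [Nat.mod_eq_of_lt (by omega)]
    simp only [cyc0]
    rw [h2]
    exact h1
  have inj0 : ∀ i j, cyc0 i = cyc0 j → i % (2 * m) = j % (2 * m) := by
    intro i j h
    have h1 : i % c.length < c.length := Nat.mod_lt _ (by omega)
    have h2 : j % c.length < c.length := Nat.mod_lt _ (by omega)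
    rw [← hl]
    exact hc.getVert_injOn' (by simp; omega) (by simp; omega) h
  let p : ℕ → ℕ := fun i => if 3 ≤ G.degree (cyc0 i) then 1 else 0
  have hsum : ∑ i ∈ Finset.range (2 * m), p i = 2 * K := by
    simp only [p]
    rw [← Finset.card_filter]
    rw [← two_mul] at hK
    rw [← hK, hk]
    refine Finset.card_bij (fun i _ => cyc0 i) ?_ ?_ ?_
    · intro i hi
      simp only [Finset.mem_filter, List.mem_toFinset] at hi ⊢
      exact ⟨c.getVert_mem_support _, hi.2⟩
    · intro i hi j hj h
      simp only [Finset.mem_filter, Finset.mem_range] at hi hj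
      have := inj0 i j h
      rwa [Nat.mod_eq_of_lt hi.1, Nat.mod_eq_of_lt hj.1] at this
    · intro v hv
      simp only [Finset.mem_filter, List.mem_toFinset] at hv
      obtain ⟨n, hn, hn1⟩ := SimpleGraph.Walk.mem_support_iff_exists_getVert.1 hv.1
      have hcv : cyc0 (n % (2 * m)) = v := by
        simp only [cyc0, hl, Nat.mod_mod]
        by_cases h : n = 2 * m
        · rw [h, Nat.mod_self, c.getVert_zero, ← hn, h, ← hl, c.getVert_length]
        · rw [Nat.mod_eq_of_lt (by omega), hn]
      refine ⟨n % (2 * m), ?_, hcv⟩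
      simp only [Finset.mem_filter, Finset.mem_range]
      exact ⟨Nat.mod_lt _ (by omega), by rw [hcv]; exact hv.2⟩
  obtain ⟨g, hg1, hg2⟩ := Mob13.balanced p (fun i => by simp only [p]; split_ifs <;> omega) m K
    (fun i => by simp only [p]; rw [per i]) hsum
  obtain ⟨U, hU⟩ := Mob13.exists_uni hG hedges hm2 (fun i => cyc0 (g + i))
    (by
      intro i hi j hj h
      have h1 : g + i ≡ g + j [MOD 2 * m] := inj0 _ _ h
      have h2 := Nat.ModEq.add_left_cancel' g h1
      have h3 : i % (2 * m) = j % (2 * m) := h2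
      rwa [Nat.mod_eq_of_lt hi, Nat.mod_eq_of_lt hj] at h3)
    (by
      intro i hi
      have h1 := adj0 (g + i)
      split_ifs with h
      · rw [show g + i + 1 = g + 2 * m by omega, per] at h1
        exact h1
      · exact h1)
  have hB1 : ((Finset.range m).filter (fun i => 3 ≤ G.degree (U.cyc i))).card ≤ K := by
    rw [← hg1, Finset.card_filter, hU]
  have hB2 : ((Finset.Ico m (2 * m)).filter (fun i => 3 ≤ G.degree (U.cyc i))).card ≤ K := by
    rw [← hg2, Finset.card_filter, hU, Finset.sum_Ico_eq_sum_range, show 2 * m - m = m by omega]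
    refine le_of_eq (Finset.sum_congr rfl fun i _ => ?_)
    change p (g + (m + i)) = p (g + m + i)
    rw [add_assoc]
  have hKk : k / 2 = K := by omega
  rw [hKk]
  unfold mob
  by_cases hne : {n | ∃ S : Finset V, IsMobileGPSet G S ∧ S.card = n}.Nonempty
  · apply csSup_le hne
    rintro n ⟨S, hS, rfl⟩
    exact U.bound (by omega) hB1 hB2 hS
  · rw [Set.not_nonempty_iff_eq_empty.1 hne]
    simp
end
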